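/- arXiv:2502.07568 — 2 statements merged into one kernel-verified Lean document; each statement's English description precedes it below -/
import Mathlib

section
/- Let A be an arbitrary Young function and u ∈ C²_c(ℝⁿ). Then for every s ∈ (0,1), 𝒥_s(u) ≤ 𝒥(u) + ((1−s)/s) · nω_n · ∫_{ℝⁿ} A(2|u(x)|) dx, where nω_n = H^{n−1}(S^{n−1}) is the surface measure of the unit sphere (ω_n being the Lebesgue measure of the unit ball in ℝⁿ). -/
open MeasureTheory Filter Topology
open scoped ENNReal RealInnerProductSpace

noncomputable section

/-- Euclidean space `ℝⁿ`. -/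
abbrev Rn (n : ℕ) : Type := EuclideanSpace ℝ (Fin n)

/-- `a` is a Young density and `A` is the Young function it generates:
`a` is nonnegative, nondecreasing, right continuous, `a 0 = 0`, `a t > 0` for `t > 0`,
`a t → ∞` as `t → ∞`, and `A t = ∫₀ᵗ a(τ) dτ` for `t ≥ 0`. -/
def IsYoungPair (A a : ℝ → ℝ) : Prop :=
  (∀ t, 0 ≤ a t) ∧
  MonotoneOn a (Set.Ici (0 : ℝ)) ∧
  (∀ t, 0 ≤ t → ContinuousWithinAt a (Set.Ici t) t) ∧
  a 0 = 0 ∧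
  (∀ t, 0 < t → 0 < a t) ∧
  Tendsto a atTop atTop ∧
  (∀ t, 0 ≤ t → A t = ∫ τ in (0:ℝ)..t, a τ)

/-- The complementary (conjugate) Young function `Ā(t) = sup {τ t − A τ : τ ≥ 0}`. -/
def conjugateYoung (A : ℝ → ℝ) (t : ℝ) : ℝ :=
  sSup {x | ∃ τ, 0 ≤ τ ∧ x = τ * t - A τ}

/-- The Orlicz modular `∫ A(|u|) dμ`, valued in `[0,∞]`. -/
def orliczModular {α : Type*} [MeasurableSpace α] (μ : Measure α) (A : ℝ → ℝ)
    (u : α → ℝ) : ℝ≥0∞ :=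
  ∫⁻ x, ENNReal.ofReal (A (|u x|)) ∂μ

/-- The Luxemburg norm `inf {k > 0 : ∫ A(|u|/k) dμ ≤ 1}`. -/
def luxNorm {α : Type*} [MeasurableSpace α] (μ : Measure α) (A : ℝ → ℝ)
    (u : α → ℝ) : ℝ :=
  sInf {k | 0 < k ∧ orliczModular μ A (fun x => u x / k) ≤ 1}

/-- Membership in the Orlicz space `L^A`: the modular is finite for some `k > 0`. -/
def MemLA {α : Type*} [MeasurableSpace α] (μ : Measure α) (A : ℝ → ℝ)
    (u : α → ℝ) : Prop :=
  ∃ k, 0 < k ∧ orliczModular μ A (fun x => u x / k) < ⊤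

/-- Membership in `E^A`: the modular is finite for every `k > 0`. -/
def MemEA {α : Type*} [MeasurableSpace α] (μ : Measure α) (A : ℝ → ℝ)
    (u : α → ℝ) : Prop :=
  ∀ k, 0 < k → orliczModular μ A (fun x => u x / k) < ⊤

/-- The measure `dν = |x−y|^{−n} dx dy` on `ℝⁿ × ℝⁿ`. -/
def nuMeasure (n : ℕ) : Measure (Rn n × Rn n) :=
  volume.withDensity fun p => ENNReal.ofReal (‖p.1 - p.2‖ ^ (-(n:ℝ)))

/-- The Hölder quotient `D^s u (x,y) = (u x − u y)/|x−y|^s`. -/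
def holderQuot {n : ℕ} (s : ℝ) (u : Rn n → ℝ) (p : Rn n × Rn n) : ℝ :=
  (u p.1 - u p.2) / ‖p.1 - p.2‖ ^ s

/-- The fractional energy `𝒥_s(u) = (1−s) ∬ A(|D^s u|) dν`, valued in `[0,∞]`. -/
def Js {n : ℕ} (A : ℝ → ℝ) (s : ℝ) (u : Rn n → ℝ) : ℝ≥0∞ :=
  ENNReal.ofReal (1 - s) * ∫⁻ p, ENNReal.ofReal (A (|holderQuot s u p|)) ∂(nuMeasure n)

/-- The real-valued fractional energy `𝒥_s(u)` (Bochner integral version). -/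
def JsReal {n : ℕ} (A : ℝ → ℝ) (s : ℝ) (u : Rn n → ℝ) : ℝ :=
  (1 - s) * ∫ p : Rn n × Rn n, A (|holderQuot s u p|) * ‖p.1 - p.2‖ ^ (-(n:ℝ))

/-- The limit Young function
`A₀(t) = ∫₀ᵗ (∫_{S^{n−1}} A(r |ω⋅e|) dH^{n−1}(ω)) dr/r`, for a fixed unit vector `e`. -/
def A0 {n : ℕ} (A : ℝ → ℝ) (e : Rn n) (t : ℝ) : ℝ :=
  ∫ r in (0:ℝ)..t,
    (∫ ω in Metric.sphere (0 : Rn n) 1, A (r * |⟪ω, e⟫|)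
      ∂(Measure.hausdorffMeasure ((n : ℝ) - 1))) / r

/-- `v` is the (distributional) weak gradient of `u`. -/
def HasWeakGradient {n : ℕ} (u : Rn n → ℝ) (v : Rn n → Rn n) : Prop :=
  LocallyIntegrable u volume ∧ LocallyIntegrable v volume ∧
  ∀ φ : Rn n → ℝ, ContDiff ℝ (⊤ : ℕ∞) φ → HasCompactSupport φ → ∀ i : Fin n,
    ∫ x, u x * fderiv ℝ φ x (EuclideanSpace.single i 1)
      = - ∫ x, ⟪v x, EuclideanSpace.single i 1⟫ * φ x

/-- The limit energy `𝒥(u) = ∫ A₀(|∇u|) dx`, equal to `⊤` when `u` has no weak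
gradient (the infimum over the empty set). -/
def Jlim {n : ℕ} (A : ℝ → ℝ) (e : Rn n) (u : Rn n → ℝ) : ℝ≥0∞ :=
  ⨅ (v : Rn n → Rn n) (_ : HasWeakGradient u v), ∫⁻ x, ENNReal.ofReal (A0 A e ‖v x‖)

/-- The limit energy `𝒥(u) = ∫ A₀(|∇u|) dx` for differentiable `u`. -/
def JlimSmooth {n : ℕ} (A : ℝ → ℝ) (e : Rn n) (u : Rn n → ℝ) : ℝ≥0∞ :=
  ∫⁻ x, ENNReal.ofReal (A0 A e ‖gradient u x‖)

/-- The real-valued limit energy `𝒥(u) = ∫ A₀(|∇u|) dx` for differentiable `u`. -/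
def JReal {n : ℕ} (A : ℝ → ℝ) (e : Rn n) (u : Rn n → ℝ) : ℝ :=
  ∫ x, A0 A e ‖gradient u x‖

/-- The `C²` norm `‖u‖_{C²} = Σ_{i ≤ 2} sup_x ‖D^i u(x)‖`. -/
def C2Norm {n : ℕ} (u : Rn n → ℝ) : ℝ :=
  ∑ i ∈ Finset.range 3, ⨆ x : Rn n, ‖iteratedFDeriv ℝ i u x‖

/-- A standard mollifier: smooth, nonnegative, supported in the closed unit ball,
with unit integral. -/
def IsMollifier {n : ℕ} (ρ : Rn n → ℝ) : Prop :=
  ContDiff ℝ (⊤ : ℕ∞) ρ ∧ (∀ x, 0 ≤ ρ x) ∧ tsupport ρ ⊆ Metric.closedBall 0 1 ∧ (∫ x, ρ x) = 1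

/-- The rescaled mollifier `ρ_ε(x) = ε^{−n} ρ(x/ε)`. -/
def mollScaled {n : ℕ} (ρ : Rn n → ℝ) (ε : ℝ) (x : Rn n) : ℝ :=
  (ε ^ n)⁻¹ * ρ (ε⁻¹ • x)

/-- Convolution `u * ρ (x) = ∫ u(y) ρ(x−y) dy`. -/
def convol {n : ℕ} (u ρ : Rn n → ℝ) (x : Rn n) : ℝ :=
  ∫ y, u y * ρ (x - y)

/-- `n ω_n`, where `ω_n` is the Lebesgue measure of the unit ball of `ℝⁿ`;
this equals the surface measure of the unit sphere. -/
def nOmega (n : ℕ) : ℝ :=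
  n * (volume (Metric.ball (0 : Rn n) 1)).toReal

/-- `F_s(x) = (1−s) ∫ A(|u x − u y|/|x−y|^s) |x−y|^{−n} dy`. -/
def Fs {n : ℕ} (A : ℝ → ℝ) (s : ℝ) (u : Rn n → ℝ) (x : Rn n) : ℝ :=
  (1 - s) * ∫ y, A (|u x - u y| / ‖x - y‖ ^ s) * ‖x - y‖ ^ (-(n:ℝ))

/-- The Matuszewska function of `A` at the origin: `M₀(t) = limsup_{δ→0⁺} A(tδ)/A(δ)`,
valued in `[0,∞]`. -/
def M0 (A : ℝ → ℝ) (t : ℝ) : ℝ≥0∞ :=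
  limsup (fun δ => ENNReal.ofReal (A (t * δ) / A δ)) (𝓝[>] (0:ℝ))

namespace S9
open Set

section Young
variable {A a : ℝ → ℝ}

lemma a_intable (hA : IsYoungPair A a) {x y : ℝ} (hx : 0 ≤ x) (hy : 0 ≤ y) :
    IntervalIntegrable a volume x y := by
  apply MonotoneOn.intervalIntegrable
  apply hA.2.1.mono
  intro z hz
  rcases Set.mem_uIcc.1 hz with h | h
  · exact hx.trans h.1
  · exact hy.trans h.1

lemma A_sub (hA : IsYoungPair A a) {x y : ℝ} (hx : 0 ≤ x) (hy : 0 ≤ y) :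
    A y - A x = ∫ τ in x..y, a τ := by
  rw [hA.2.2.2.2.2.2 x hx, hA.2.2.2.2.2.2 y hy,
    intervalIntegral.integral_interval_sub_left (a_intable hA le_rfl hy) (a_intable hA le_rfl hx)]

lemma A_sub_le (hA : IsYoungPair A a) {x y : ℝ} (hx : 0 ≤ x) (hxy : x ≤ y) :
    A y - A x ≤ a y * (y - x) := by
  rw [A_sub hA hx (hx.trans hxy)]
  have := intervalIntegral.integral_mono_on hxy (a_intable hA hx (hx.trans hxy))
    (intervalIntegrable_const (c := a y)) (fun z hz => hA.2.1 (hx.trans hz.1) (hx.trans hxy) hz.2)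
  simpa [mul_comm] using this

lemma le_A_sub (hA : IsYoungPair A a) {x y : ℝ} (hx : 0 ≤ x) (hxy : x ≤ y) :
    a x * (y - x) ≤ A y - A x := by
  rw [A_sub hA hx (hx.trans hxy)]
  have := intervalIntegral.integral_mono_on hxy
    (intervalIntegrable_const (c := a x)) (a_intable hA hx (hx.trans hxy))
    (fun z hz => hA.2.1 hx (hx.trans hz.1) hz.1)
  simpa [mul_comm] using this

lemma A_zero (hA : IsYoungPair A a) : A 0 = 0 := by
  rw [hA.2.2.2.2.2.2 0 le_rfl]; simp

lemma A_mono (hA : IsYoungPair A a) : MonotoneOn A (Ici 0) := by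
  intro x hx y hy hxy
  have := le_A_sub hA hx hxy
  nlinarith [mul_nonneg (hA.1 x) (sub_nonneg.2 hxy)]

lemma A_nonneg (hA : IsYoungPair A a) {x : ℝ} (hx : 0 ≤ x) : 0 ≤ A x := by
  have := A_mono hA (self_mem_Ici) hx hx
  rwa [A_zero hA] at this

lemma A_le (hA : IsYoungPair A a) {x : ℝ} (hx : 0 ≤ x) : A x ≤ a x * x := by
  have := A_sub_le hA le_rfl hx
  simpa [A_zero hA] using this

lemma A_convex (hA : IsYoungPair A a) : ConvexOn ℝ (Ici 0) A := by
  apply convexOn_of_slope_mono_adjacent (convex_Ici 0)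
  intro x y z hx hz hxy hyz
  have hx : 0 ≤ x := hx
  have h1 := A_sub_le hA hx hxy.le
  have h2 := le_A_sub hA (hx.trans hxy.le) hyz.le
  calc _ ≤ a y := by rw [div_le_iff₀ (by linarith)]; exact h1
    _ ≤ _ := by rw [le_div_iff₀ (by linarith)]; exact h2

lemma B_convex (hA : IsYoungPair A a) : ConvexOn ℝ univ (fun t => A |t|) := by
  refine ⟨convex_univ, ?_⟩
  intro x _ y _ p q hp hq hpq
  calc A |p • x + q • y| ≤ A (p • |x| + q • |y|) := by
        apply A_mono hA
        · exact abs_nonneg (p • x + q • y)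
        · exact add_nonneg (mul_nonneg hp (abs_nonneg _)) (mul_nonneg hq (abs_nonneg _))
        · simp only [smul_eq_mul]
          refine (abs_add_le _ _).trans ?_
          rw [abs_mul, abs_mul, abs_of_nonneg hp, abs_of_nonneg hq]
    _ ≤ _ := (A_convex hA).2 (abs_nonneg x) (abs_nonneg y) hp hq hpq

lemma B_cont (hA : IsYoungPair A a) : Continuous (fun t => A |t|) := by
  have := (B_convex hA).continuousOn isOpen_univ
  exact continuousOn_univ.1 this

lemma B_nonneg (hA : IsYoungPair A a) (t : ℝ) : 0 ≤ A |t| := A_nonneg hA (abs_nonneg _)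

/-- far bound -/
lemma B_far (hA : IsYoungPair A a) (x y : ℝ) {l : ℝ} (hl0 : 0 ≤ l) (hl : l ≤ 1) :
    A |(x - y) * l| ≤ l * (A |2 * x| / 2 + A |2 * y| / 2) := by
  have h1 := (B_convex hA).2 (mem_univ (x - y)) (mem_univ 0) hl0 (sub_nonneg.2 hl) (by ring)
  have h2 := (B_convex hA).2 (mem_univ (2 * x)) (mem_univ (-(2 * y)))
    (by norm_num : (0:ℝ) ≤ 1/2) (by norm_num : (0:ℝ) ≤ 1/2) (by norm_num)
  simp only [smul_eq_mul, mul_zero, add_zero, abs_zero, A_zero hA, abs_neg] at h1 h2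
  have e1 : 1 / 2 * (2 * x) + 1 / 2 * -(2 * y) = x - y := by ring
  rw [e1] at h2
  rw [mul_comm (x - y)]
  calc _ ≤ _ := h1
    _ ≤ _ := mul_le_mul_of_nonneg_left (by linarith) hl0

end Young

section Polar
variable {n : ℕ}

lemma polar (hn : 0 < n) (F : Rn n → ℝ≥0∞) (hF : Measurable F) :
    ∫⁻ x, F x = ∫⁻ ω : Metric.sphere (0 : Rn n) 1,
      (∫⁻ r in Ioi (0:ℝ), F (r • (ω : Rn n)) * ENNReal.ofReal (r ^ (n - 1)))
        ∂(volume : Measure (Rn n)).toSphere := by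
  have : Nonempty (Fin n) := ⟨⟨0, hn⟩⟩
  have : Nontrivial (Rn n) := inferInstance
  have hdim : Module.finrank ℝ (Rn n) = n := by simp
  have mp := (volume : Measure (Rn n)).measurePreserving_homeomorphUnitSphereProd
  rw [hdim] at mp
  have hF2 : Measurable (fun q : Metric.sphere (0 : Rn n) 1 × Ioi (0:ℝ) =>
      F (q.2.1 • q.1.1)) := by
    apply hF.comp
    fun_prop
  calc ∫⁻ x, F x = ∫⁻ x in ({0}ᶜ : Set (Rn n)), F x := by
        rw [restrict_compl_singleton]
    _ = ∫⁻ x : ({(0)}ᶜ : Set (Rn n)), F x ∂((volume : Measure (Rn n)).comap (Subtype.val)) := by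
        rw [lintegral_subtype_comap (measurableSet_singleton _).compl]
    _ = ∫⁻ q, F (q.2.1 • q.1.1) ∂((volume : Measure (Rn n)).toSphere.prod (.volumeIoiPow (n - 1))) := by
        rw [← mp.lintegral_comp hF2]
        apply lintegral_congr
        intro x
        have hx : ‖(x : Rn n)‖ ≠ 0 := norm_ne_zero_iff.2 x.2
        simp [smul_smul, hx]
    _ = ∫⁻ ω : Metric.sphere (0 : Rn n) 1, (∫⁻ r : Ioi (0:ℝ), F (r.1 • ω.1)
          ∂(.volumeIoiPow (n - 1))) ∂(volume : Measure (Rn n)).toSphere := by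
        rw [lintegral_prod _ hF2.aemeasurable]
    _ = _ := by
        apply lintegral_congr
        intro ω
        rw [Measure.volumeIoiPow, lintegral_withDensity_eq_lintegral_mul _ (by fun_prop)
          (by apply hF.comp; fun_prop)]
        simp only [Pi.mul_apply]
        rw [lintegral_subtype_comap measurableSet_Ioi
          (fun r => ENNReal.ofReal (r ^ (n-1)) * F (r • ω.1))]
        simp_rw [mul_comm]
end Polar

section Sphere
variable {m : ℕ}

lemma volume_box {n : ℕ} (S : Set (Rn n)) (c : Fin n → ℝ)
    (hc : ∀ x ∈ S, ∀ y ∈ S, ∀ i, |x i - y i| ≤ c i) :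
    volume S ≤ ∏ i, ENNReal.ofReal (c i) := by
  have mp := EuclideanSpace.volume_preserving_symm_measurableEquiv_toLp (Fin n)
  set f := (MeasurableEquiv.toLp 2 (Fin n → ℝ)).symm
  have e : f ⁻¹' (f '' S) = S := preimage_image_eq _ f.injective
  rw [← e, mp.measure_preimage_equiv]
  refine (Real.volume_pi_le_prod_diam _).trans ?_
  apply Finset.prod_le_prod'
  intro i _
  apply Metric.ediam_le
  rintro _ ⟨_, ⟨x, hx, rfl⟩, rfl⟩ _ ⟨_, ⟨y, hy, rfl⟩, rfl⟩
  rw [edist_dist]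
  exact ENNReal.ofReal_le_ofReal (hc x hx y hy i)

lemma exists_rot {n : ℕ} (v w : Rn n) (h : ‖v‖ = ‖w‖) : ∃ L : Rn n ≃ₗᵢ[ℝ] Rn n, L v = w :=
  ⟨_, Submodule.reflection_sub h⟩

lemma cone_volume (T : Set (Rn (m+1))) (p : Rn (m+1)) (hp : ‖p‖ = 1) (D h : ℝ)
    (hD0 : 0 ≤ D) (hh : 0 < h)
    (hpT : p ∈ T) (hD : ∀ x ∈ T, ∀ y ∈ T, ‖x - y‖ ≤ D) :
    volume {x : Rn (m+1) | ‖x‖ ∈ Ioo (max 0 (1-h)) 1 ∧ ‖x‖⁻¹ • x ∈ T} ≤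
      ENNReal.ofReal ((h + D^2) * (D * (1+h))^m) := by
  set S := {x : Rn (m+1) | ‖x‖ ∈ Ioo (max 0 (1-h)) 1 ∧ ‖x‖⁻¹ • x ∈ T} with hS
  obtain ⟨L, hL⟩ := exists_rot p (EuclideanSpace.single 0 1) (by simp [hp])
  have e1 : volume S = volume (L '' S) := by
    have : L.symm ⁻¹' S = L '' S := by
      ext x; constructor
      · intro hx; exact ⟨_, hx, by simp⟩
      · rintro ⟨y, hy, rfl⟩; simpa using hy
    rw [← this]
    exact ((L.symm.measurePreserving).measure_preimage_equiv (f := L.symm.toHomeomorph.toMeasurableEquiv) S).symm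
  have key : ∀ x ∈ S, ∃ r ω, r ∈ Ioo (max 0 (1-h)) 1 ∧ ω ∈ T ∧ ‖ω‖ = 1 ∧ x = r • ω := by
    intro x hx
    have hx0 : 0 < ‖x‖ := (le_max_left _ _).trans_lt hx.1.1
    refine ⟨‖x‖, ‖x‖⁻¹ • x, hx.1, hx.2, ?_, ?_⟩
    · rw [norm_smul, norm_inv, norm_norm, inv_mul_cancel₀ hx0.ne']
    · rw [smul_smul, mul_inv_cancel₀ hx0.ne', one_smul]
  have hprod : ENNReal.ofReal ((h + D^2) * (D * (1+h))^m) =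
      ∏ i : Fin (m+1), ENNReal.ofReal ((Fin.cons (h + D^2) (fun _ => D * (1+h)) : Fin (m+1) → ℝ) i) := by
    rw [Fin.prod_univ_succ, ENNReal.ofReal_mul (by positivity), ENNReal.ofReal_pow (by positivity)]
    simp
  rw [e1, hprod]
  apply volume_box
  have c0 : ∀ r ω, r ∈ Ioo (max 0 (1-h)) 1 → ω ∈ T → ‖ω‖ = 1 →
      (L (r • ω)) 0 ∈ Icc (1 - h - D^2/2) 1 := by
    intro r ω hr hω h1
    have hr1 : 1 - h < r := (le_max_right _ _).trans_lt hr.1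
    have hr0 : 0 < r := (le_max_left _ _).trans_lt hr.1
    have : (L (r • ω)) 0 = r * ⟪ω, p⟫ := by
      rw [← L.inner_map_map, hL, map_smul, EuclideanSpace.inner_single_right]
      simp
    rw [this]
    have h2 : ‖ω - p‖^2 = 2 - 2 * ⟪ω, p⟫ := by
      rw [@norm_sub_sq_real, h1, hp]; ring
    have h3 := hD ω hω p hpT
    have h4 : ‖ω - p‖^2 ≤ D^2 := by gcongr
    have h5 := sq_nonneg ‖ω - p‖
    have h6 := hr.2
    constructor <;> nlinarith
  have ci : ∀ r ω r' ω', r ∈ Ioo (max 0 (1-h)) 1 → ω ∈ T → r' ∈ Ioo (max 0 (1-h)) 1 → ω' ∈ T →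
      ∀ i : Fin m, |(L (r • ω)) i.succ - (L (r' • ω')) i.succ| ≤ D * (1 + h) := by
    intro r ω r' ω' hr hω hr' hω' i
    have hr1 : 1 - h < r := (le_max_right _ _).trans_lt hr.1
    have hr0 : 0 < r := (le_max_left _ _).trans_lt hr.1
    have hr1' : 1 - h < r' := (le_max_right _ _).trans_lt hr'.1
    have a1 : |(L ω) i.succ - (L ω') i.succ| ≤ D := by
      have := EuclideanSpace.norm_eq (L ω - L ω')
      calc _ = ‖(L ω - L ω') i.succ‖ := by simp
        _ ≤ ‖L ω - L ω'‖ := PiLp.norm_apply_le _ _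
        _ = ‖ω - ω'‖ := by rw [← map_sub, L.norm_map]
        _ ≤ D := hD _ hω _ hω'
    have a2 : |(L ω') i.succ| ≤ D := by
      calc _ = ‖(L ω' - L p) i.succ‖ := by simp [hL]
        _ ≤ ‖L ω' - L p‖ := PiLp.norm_apply_le _ _
        _ = ‖ω' - p‖ := by rw [← map_sub, L.norm_map]
        _ ≤ D := hD _ hω' _ hpT
    have a3 : |r - r'| ≤ h := by rw [abs_le]; constructor <;> linarith [hr.2, hr'.2]
    have : (L (r • ω)) i.succ - (L (r' • ω')) i.succ =
       r * ((L ω) i.succ - (L ω') i.succ) + (r - r') * (L ω') i.succ := by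
      simp; ring
    rw [this]
    refine (abs_add_le _ _).trans ?_
    rw [abs_mul, abs_mul, abs_of_pos hr0]
    have b1 : r * |(L ω) i.succ - (L ω') i.succ| ≤ 1 * D :=
      mul_le_mul hr.2.le a1 (abs_nonneg _) zero_le_one
    have b2 : |r - r'| * |(L ω') i.succ| ≤ h * D := mul_le_mul a3 a2 (abs_nonneg _) hh.le
    linarith
  rintro _ ⟨x, hx, rfl⟩ _ ⟨y, hy, rfl⟩ i
  obtain ⟨r, ω, hr, hω, h1, rfl⟩ := key x hx
  obtain ⟨r', ω', hr', hω', h1', rfl⟩ := key y hy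
  refine Fin.cases ?_ (fun i => ?_) i
  · have q1 := c0 r ω hr hω h1
    have q2 := c0 r' ω' hr' hω' h1'
    simp only [Fin.cons_zero]
    rw [abs_le]
    constructor <;> nlinarith [q1.1, q1.2, q2.1, q2.2]
  · simp only [Fin.cons_succ]
    exact ci r ω r' ω' hr hω hr' hω' i

/-- surface measure on the ambient space -/
def sig (n : ℕ) : Measure (Rn n) := (volume : Measure (Rn n)).toSphere.map Subtype.val

lemma lint_pow_lower (h : ℝ) (hh : 0 < h) (h1 : h < 1) (m : ℕ) :
    ENNReal.ofReal (h * (1-h)^m) ≤ ∫⁻ r in Ioo (1-h) 1, ENNReal.ofReal (r ^ m) := by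
  calc ENNReal.ofReal (h * (1-h)^m) = ∫⁻ r in Ioo (1-h) 1, ENNReal.ofReal ((1-h) ^ m) := by
        rw [setLIntegral_const, Real.volume_Ioo, mul_comm, ENNReal.ofReal_mul (by
          have : 0 ≤ 1 - h := by linarith
          positivity)]
        congr 2; ring
    _ ≤ _ := by
        apply setLIntegral_mono (by fun_prop)
        intro r hr
        apply ENNReal.ofReal_le_ofReal
        have := hr.1
        have : 0 ≤ 1 - h := by linarith
        gcongr

lemma sig_cone (T : Set (Rn (m+1))) (hT : MeasurableSet T) (h : ℝ) (hh : 0 < h) (h1 : h < 1) :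
    sig (m+1) T * ENNReal.ofReal (h * (1-h)^m) ≤
      volume {x : Rn (m+1) | ‖x‖ ∈ Ioo (max 0 (1-h)) 1 ∧ ‖x‖⁻¹ • x ∈ T} := by
  have hS : MeasurableSet {x : Rn (m+1) | ‖x‖ ∈ Ioo (max 0 (1-h)) 1 ∧ ‖x‖⁻¹ • x ∈ T} := by
    apply MeasurableSet.inter
    · exact measurable_norm measurableSet_Ioo
    · have : Measurable (fun x : Rn (m+1) => ‖x‖⁻¹ • x) := by fun_prop
      exact this hT
  rw [← lintegral_indicator_one hS, polar (by omega) _ (by fun_prop (disch := exact hS))]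
  have hT' : MeasurableSet ((Subtype.val : Metric.sphere (0 : Rn (m+1)) 1 → _) ⁻¹' T) :=
    measurable_subtype_coe hT
  rw [sig, Measure.map_apply measurable_subtype_coe hT, mul_comm, ← lintegral_indicator_const hT']
  apply lintegral_mono
  intro ω
  by_cases hω : ω.1 ∈ T
  · rw [indicator_of_mem (by exact hω)]
    refine (lint_pow_lower h hh h1 m).trans ?_
    have hsub : Ioo (1-h) 1 ⊆ Ioi (0:ℝ) := fun r hr => by
      have := hr.1
      show 0 < r
      linarith
    refine le_trans ?_ (lintegral_mono_set hsub)
    apply setLIntegral_mono' measurableSet_Ioo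
    intro r hr
    have hr0 : 0 < r := hsub hr
    have hn : ‖(ω : Rn (m+1))‖ = 1 := by simpa using ω.2
    have hno : ‖r • (ω : Rn (m+1))‖ = r := by rw [norm_smul, hn, Real.norm_of_nonneg hr0.le, mul_one]
    rw [indicator_of_mem]
    · simp
    · refine ⟨?_, ?_⟩
      · rw [hno]; exact ⟨max_lt hr0 hr.1, hr.2⟩
      · rw [hno, smul_smul, inv_mul_cancel₀ hr0.ne', one_smul]; exact hω
  · rw [indicator_of_notMem (by exact hω)]
    exact zero_le

lemma sig_sphere_compl : sig (m+1) (Metric.sphere 0 1)ᶜ = 0 := by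
  rw [sig, Measure.map_apply measurable_subtype_coe
    (Metric.isClosed_sphere.measurableSet).compl]
  convert measure_empty (μ := (volume : Measure (Rn (m+1))).toSphere)
  ext x; simp

lemma sig_le_C (h : ℝ) (hh : 0 < h) (h1 : h < 1) (T : Set (Rn (m+1)))
    (hT : Metric.ediam T ≤ ENNReal.ofReal h) :
    sig (m+1) T ≤ ENNReal.ofReal ((1+h) * ((1+h)/(1-h))^m) * Metric.ediam T ^ (((m+1 : ℕ):ℝ) - 1) := by
  have ee : (((m+1 : ℕ):ℝ) - 1) = (m:ℝ) := by push_cast; ring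
  rw [ee, ENNReal.rpow_natCast]
  set T' := closure T ∩ Metric.sphere 0 1 with hT'
  have hm : MeasurableSet T' := isClosed_closure.measurableSet.inter Metric.isClosed_sphere.measurableSet
  have s1 : sig (m+1) T ≤ sig (m+1) T' := by
    calc _ ≤ sig (m+1) (T' ∪ (Metric.sphere 0 1)ᶜ) := by
          apply measure_mono
          intro x hx
          by_cases h : x ∈ Metric.sphere (0 : Rn (m+1)) 1
          · exact Or.inl ⟨subset_closure hx, h⟩
          · exact Or.inr h
      _ ≤ _ := measure_union_le _ _
      _ = _ := by rw [sig_sphere_compl, add_zero]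
  refine s1.trans ?_
  rcases T'.eq_empty_or_nonempty with he | ⟨p, hp⟩
  · rw [he]; simp
  have hd : Metric.ediam T' ≤ Metric.ediam T := by
    rw [← Metric.ediam_closure T]; exact Metric.ediam_mono inter_subset_left
  have hfin : Metric.ediam T' ≠ ⊤ := ((hd.trans hT).trans_lt ENNReal.ofReal_lt_top).ne
  set D := (Metric.ediam T').toReal with hDdef
  have hDe : Metric.ediam T' = ENNReal.ofReal D := (ENNReal.ofReal_toReal hfin).symm
  have hD0 : 0 ≤ D := ENNReal.toReal_nonneg
  have hDh : D ≤ h := by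
    have := hd.trans hT
    rw [hDe] at this
    exact (ENNReal.ofReal_le_ofReal_iff hh.le).1 this
  have hpn : ‖p‖ = 1 := by simpa using hp.2
  have c := (sig_cone T' hm h hh h1).trans (cone_volume T' p hpn D h hD0 hh hp (by
    intro x hx y hy
    rw [← dist_eq_norm]
    have := Metric.edist_le_ediam_of_mem hx hy
    rw [hDe, edist_dist] at this
    exact (ENNReal.ofReal_le_ofReal_iff hD0).1 this))
  have hpos : 0 < h * (1-h)^m := by
    have : 0 < 1 - h := by linarith
    positivity
  have hne : ENNReal.ofReal (h * (1-h)^m) ≠ 0 := by simpa using hpos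
  have : sig (m+1) T' ≤ ENNReal.ofReal ((h + D^2) * (D * (1+h))^m) / ENNReal.ofReal (h * (1-h)^m) :=
    (ENNReal.le_div_iff_mul_le (Or.inl hne) (Or.inl ENNReal.ofReal_ne_top)).2 c
  refine this.trans ?_
  rw [← ENNReal.ofReal_div_of_pos hpos]
  calc _ ≤ ENNReal.ofReal ((1+h) * ((1+h)/(1-h))^m * D^m) := by
        apply ENNReal.ofReal_le_ofReal
        have h2 : 0 < 1 - h := by linarith
        rw [div_le_iff₀ hpos]
        have : (1 + h) * ((1 + h) / (1 - h)) ^ m * D ^ m * (h * (1 - h) ^ m) =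
          ((1+h) * h) * (D * (1+h))^m := by
          rw [div_pow, mul_pow]; field_simp
        rw [this]
        apply mul_le_mul_of_nonneg_right _ (by positivity)
        nlinarith
    _ ≤ _ := by
        rw [ENNReal.ofReal_mul (by
          have h2 : 0 < 1 - h := by linarith
          positivity), ENNReal.ofReal_pow hD0, ← hDe]
        gcongr

lemma sig_le : sig (m+1) ≤ Measure.hausdorffMeasure (((m+1 : ℕ):ℝ) - 1) := by
  have key : ∀ h : ℝ, 0 < h → h < 1 → ∀ T,
      sig (m+1) T ≤ ENNReal.ofReal ((1+h) * ((1+h)/(1-h))^m) *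
        (Measure.hausdorffMeasure (((m+1 : ℕ):ℝ) - 1) : Measure (Rn (m+1))) T := by
    intro h hh h1 T
    set C := ENNReal.ofReal ((1+h) * ((1+h)/(1-h))^m) with hC
    have h2 : 0 < 1 - h := by linarith
    have hC0 : C ≠ 0 := by
      have : 0 < (1+h) * ((1+h)/(1-h))^m := by positivity
      simpa [hC] using this
    have hCt : C ≠ ⊤ := ENNReal.ofReal_ne_top
    have := Measure.le_hausdorffMeasure (((m+1 : ℕ):ℝ) - 1) (C⁻¹ • sig (m+1)) (ENNReal.ofReal h)
      (by simpa using hh) (by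
        intro s hs
        simp only [Measure.smul_apply, smul_eq_mul]
        rw [ENNReal.inv_mul_le_iff hC0 hCt]
        exact sig_le_C h hh h1 s hs)
    have := this T
    simp only [Measure.smul_apply, smul_eq_mul] at this
    rwa [ENNReal.inv_mul_le_iff hC0 hCt] at this
  apply Measure.le_intro
  intro T _ _
  have lim : Tendsto (fun h : ℝ => ENNReal.ofReal ((1+h) * ((1+h)/(1-h))^m) *
        (Measure.hausdorffMeasure (((m+1 : ℕ):ℝ) - 1) : Measure (Rn (m+1))) T) (𝓝[>] 0)
        (𝓝 (1 * (Measure.hausdorffMeasure (((m+1 : ℕ):ℝ) - 1) : Measure (Rn (m+1))) T)) := by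
    apply ENNReal.Tendsto.mul_const _ (Or.inl one_ne_zero)
    have : ContinuousAt (fun h : ℝ => (1+h) * ((1+h)/(1-h))^m) 0 := by
      apply ContinuousAt.mul (by fun_prop)
      apply ContinuousAt.pow
      apply ContinuousAt.div (by fun_prop) (by fun_prop) (by norm_num)
    have := (this.tendsto.mono_left (nhdsWithin_le_nhds (s := Ioi 0)))
    have := ENNReal.tendsto_ofReal this
    simpa using this
  rw [one_mul] at lim
  apply ge_of_tendsto lim
  filter_upwards [Ioo_mem_nhdsGT (show (0:ℝ) < 1 by norm_num)] with h hh
  exact key h hh.1 hh.2 T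

lemma sig_le_restrict : sig (m+1) ≤
    (Measure.hausdorffMeasure (((m+1 : ℕ):ℝ) - 1)).restrict (Metric.sphere 0 1) := by
  have : sig (m+1) = (sig (m+1)).restrict (Metric.sphere 0 1) := by
    rw [Measure.restrict_eq_self_of_ae_mem]
    exact sig_sphere_compl
  rw [this]
  exact Measure.restrict_mono subset_rfl sig_le
end Sphere

section Finite
variable {m : ℕ}

lemma normalize_lip {x y : Rn (m+1)} (hx : 1 ≤ ‖x‖) (hy : 1 ≤ ‖y‖) :
    ‖‖x‖⁻¹ • x - ‖y‖⁻¹ • y‖ ≤ 2 * ‖x - y‖ := by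
  have hx0 : 0 < ‖x‖ := by linarith
  have hy0 : 0 < ‖y‖ := by linarith
  have : ‖x‖⁻¹ • x - ‖y‖⁻¹ • y = ‖x‖⁻¹ • (x - y) + (‖x‖⁻¹ * (‖y‖ - ‖x‖)) • (‖y‖⁻¹ • y) := by
    rw [smul_sub, smul_smul, mul_sub, sub_mul, sub_smul]
    have e1 : ‖x‖⁻¹ * ‖y‖ * ‖y‖⁻¹ = ‖x‖⁻¹ := by field_simp
    have e2 : ‖x‖⁻¹ * ‖x‖ * ‖y‖⁻¹ = ‖y‖⁻¹ := by field_simp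
    rw [e1, e2]; abel
  rw [this]
  refine (norm_add_le _ _).trans ?_
  rw [norm_smul, norm_smul, norm_smul, norm_mul, norm_inv, norm_norm, norm_inv, norm_norm,
    inv_mul_cancel₀ hy0.ne', mul_one, ← mul_add]
  have h1 : ‖x‖⁻¹ ≤ 1 := inv_le_one_of_one_le₀ hx
  have h2 : ‖‖y‖ - ‖x‖‖ ≤ ‖x - y‖ := by
    rw [norm_sub_rev x y]; exact abs_norm_sub_norm_le y x
  have h3 : 0 ≤ ‖x - y‖ + ‖‖y‖ - ‖x‖‖ := by positivity
  calc _ ≤ 1 * (‖x - y‖ + ‖‖y‖ - ‖x‖‖) := by gcongr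
    _ ≤ _ := by linarith

def emb (i : Fin (m+1)) (c : ℝ) (z : Fin m → ℝ) : Rn (m+1) :=
  WithLp.toLp 2 (i.insertNth c z : Fin (m+1) → ℝ)

lemma emb_lip (i : Fin (m+1)) (c : ℝ) : ∃ K, LipschitzWith K (emb i c) := by
  have h1 : LipschitzWith 1 (fun z : Fin m → ℝ => (i.insertNth c z : Fin (m+1) → ℝ)) := by
    apply LipschitzWith.of_dist_le_mul
    intro z w
    rw [dist_pi_le_iff (by positivity)]
    intro j
    rcases Fin.eq_self_or_eq_succAbove i j with rfl | ⟨k, rfl⟩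
    · simp
    · simpa using dist_le_pi_dist z w k
  exact ⟨_, (PiLp.lipschitzWith_toLp 2 (fun _ : Fin (m+1) => ℝ)).comp h1⟩

lemma emb_norm (i : Fin (m+1)) (c : ℝ) (hc : |c| = 1) (z : Fin m → ℝ) : 1 ≤ ‖emb i c z‖ := by
  have := PiLp.norm_apply_le (emb i c z) i
  rw [← hc]
  simpa [emb] using this

lemma patch_finite (i : Fin (m+1)) (c : ℝ) (hc : |c| = 1) :
    (Measure.hausdorffMeasure (((m+1 : ℕ):ℝ) - 1) : Measure (Rn (m+1)))
      ((fun z => ‖emb i c z‖⁻¹ • emb i c z) '' (Icc (-1) 1)) < ⊤ := by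
  obtain ⟨K, hK⟩ := emb_lip i c
  have ee : (((m+1 : ℕ):ℝ) - 1) = (m:ℝ) := by push_cast; ring
  rw [ee]
  have : LipschitzWith (2 * K) (fun z => ‖emb i c z‖⁻¹ • emb i c z) := by
    apply LipschitzWith.of_dist_le_mul
    intro z w
    rw [dist_eq_norm]
    refine (normalize_lip (emb_norm i c hc z) (emb_norm i c hc w)).trans ?_
    have := hK.dist_le_mul z w
    rw [dist_eq_norm] at this
    push_cast
    linarith
  refine (this.hausdorffMeasure_image_le (Nat.cast_nonneg m) _).trans_lt ?_
  have hv : (Measure.hausdorffMeasure (m:ℝ) : Measure (Fin m → ℝ)) = volume := by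
    have := hausdorffMeasure_pi_real (ι := Fin m)
    simpa using this
  rw [hv]
  apply ENNReal.mul_lt_top
  · exact ENNReal.rpow_lt_top_of_nonneg (Nat.cast_nonneg m) ENNReal.coe_ne_top
  · exact isCompact_Icc.measure_lt_top

lemma sphere_finite : (Measure.hausdorffMeasure (((m+1 : ℕ):ℝ) - 1) : Measure (Rn (m+1)))
      (Metric.sphere 0 1) < ⊤ := by
  have hsub : Metric.sphere (0 : Rn (m+1)) 1 ⊆ ⋃ i : Fin (m+1),
     (((fun z => ‖emb i 1 z‖⁻¹ • emb i 1 z) '' (Icc (-1) 1)) ∪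
      ((fun z => ‖emb i (-1) z‖⁻¹ • emb i (-1) z) '' (Icc (-1) 1))) := by
    intro x hx
    have hxn : ‖x‖ = 1 := by simpa using hx
    obtain ⟨i, -, hi⟩ := Finset.exists_max_image Finset.univ (fun j => |x j|) ⟨0, by simp⟩
    have hpos : 0 < |x i| := by
      by_contra hcon
      have : x = 0 := by
        ext j
        have h1 := hi j (by simp)
        have : |x j| ≤ 0 := by linarith
        simpa using this
      rw [this] at hxn
      simp at hxn
    have main : ∀ c : ℝ, x i = c * |x i| → x ∈ ((fun z => ‖emb i c z‖⁻¹ • emb i c z) '' (Icc (-1) 1)) := by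
      intro c hc
      refine ⟨fun k => x (i.succAbove k) / |x i|, ?_, ?_⟩
      · constructor
        · intro k
          have h1 := hi (i.succAbove k) (by simp)
          have := (abs_le.1 h1).1
          simp only [Pi.neg_apply, Pi.one_apply]
          rw [le_div_iff₀ hpos]; linarith
        · intro k
          have h1 := hi (i.succAbove k) (by simp)
          have := (abs_le.1 h1).2
          simp only [Pi.one_apply]
          rw [div_le_iff₀ hpos]; linarith
      · have e : emb i c (fun k => x (i.succAbove k) / |x i|) = |x i|⁻¹ • x := by
          ext j
          rcases Fin.eq_self_or_eq_succAbove i j with rfl | ⟨k, rfl⟩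
          · simp only [emb, Fin.insertNth_apply_same, PiLp.smul_apply, smul_eq_mul]
            rw [hc, abs_mul, abs_abs]
            have : c = x j / |x j| := by field_simp; linarith
            have hcc : |c| = 1 := by rw [this, abs_div, abs_abs, div_self hpos.ne']
            rw [hcc]; field_simp
          · simp [emb]; ring
        simp only [e]
        rw [norm_smul, hxn, smul_smul]
        simp [hpos.ne']
    apply mem_iUnion.2
    refine ⟨i, ?_⟩
    rcases abs_cases (x i) with h | h
    · left; apply main; linarith [h.1]
    · right; apply main; linarith [h.1]
  refine (measure_mono hsub).trans_lt ?_
  refine (measure_iUnion_le _).trans_lt ?_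
  rw [tsum_fintype]
  refine ENNReal.sum_lt_top.2 ?_
  intro i _
  refine (measure_union_le _ _).trans_lt ?_
  exact ENNReal.add_lt_top.2 ⟨patch_finite i 1 (by simp), patch_finite i (-1) (by simp)⟩

end Finite

section AZero
variable {m : ℕ} {A a : ℝ → ℝ}

lemma ofReal_A0 (hA : IsYoungPair A a) (e : Rn (m+1)) (he : ‖e‖ = 1) (t : ℝ) (ht : 0 ≤ t) :
    ENNReal.ofReal (A0 A e t) = ∫⁻ r in Ioo 0 t, ∫⁻ ω, ENNReal.ofReal (A |r * ⟪ω, e⟫| / r) ∂((Measure.hausdorffMeasure (((m+1 : ℕ):ℝ) - 1) : Measure (Rn (m+1))).restrict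
        (Metric.sphere 0 1)) := by
  have hfin : IsFiniteMeasure (((Measure.hausdorffMeasure (((m+1 : ℕ):ℝ) - 1) : Measure (Rn (m+1))).restrict
        (Metric.sphere 0 1))) := ⟨by
    rw [Measure.restrict_apply_univ]; exact sphere_finite⟩
  have hae : ∀ᵐ ω ∂((Measure.hausdorffMeasure (((m+1 : ℕ):ℝ) - 1) : Measure (Rn (m+1))).restrict
        (Metric.sphere 0 1)), ω ∈ Metric.sphere (0 : Rn (m+1)) 1 :=
    ae_restrict_mem Metric.isClosed_sphere.measurableSet
  have hcont : Continuous (fun q : ℝ × Rn (m+1) => A |q.1 * ⟪q.2, e⟫|) :=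
    (B_cont hA).comp (by fun_prop)
  have hbd : ∀ r : ℝ, 0 ≤ r → ∀ᵐ ω ∂((Measure.hausdorffMeasure (((m+1 : ℕ):ℝ) - 1) : Measure (Rn (m+1))).restrict
        (Metric.sphere 0 1)), ‖A |r * ⟪ω, e⟫|‖ ≤ A r := by
    intro r hr
    filter_upwards [hae] with ω hω
    rw [Real.norm_of_nonneg (B_nonneg hA _)]
    apply A_mono hA (show (0:ℝ) ≤ |r * ⟪ω, e⟫| from abs_nonneg _) hr
    have h1 : |⟪ω, e⟫| ≤ 1 := by
      have := abs_real_inner_le_norm ω e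
      have h2 : ‖ω‖ = 1 := by simpa using hω
      rwa [h2, he, one_mul] at this
    rw [abs_mul, abs_of_nonneg hr]
    nlinarith
  have hint : ∀ r : ℝ, 0 ≤ r → Integrable (fun ω => A |r * ⟪ω, e⟫|) ((Measure.hausdorffMeasure (((m+1 : ℕ):ℝ) - 1) : Measure (Rn (m+1))).restrict
        (Metric.sphere 0 1)) := by
    intro r hr
    apply Integrable.of_bound (C := A r) _ (hbd r hr)
    exact (hcont.comp (by fun_prop : Continuous (fun ω : Rn (m+1) => (r, ω)))).aestronglyMeasurable
  set G : ℝ → ℝ := fun r => ∫ ω, A |r * ⟪ω, e⟫| ∂((Measure.hausdorffMeasure (((m+1 : ℕ):ℝ) - 1) : Measure (Rn (m+1))).restrict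
        (Metric.sphere 0 1)) with hG
  have hGm : StronglyMeasurable G := by
    have : StronglyMeasurable (fun q : ℝ × Rn (m+1) => A |q.1 * ⟪q.2, e⟫|) := hcont.stronglyMeasurable
    exact this.integral_prod_right'
  have hG0 : ∀ r, 0 ≤ G r := fun r => integral_nonneg (fun ω => B_nonneg hA _)
  have hGle : ∀ r, 0 ≤ r → G r ≤ A r * (((Measure.hausdorffMeasure (((m+1 : ℕ):ℝ) - 1) : Measure (Rn (m+1))).restrict
        (Metric.sphere 0 1))).real univ := by
    intro r hr
    have := norm_integral_le_of_norm_le_const (hbd r hr)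
    exact (le_abs_self _).trans this
  have e1 : A0 A e t = ∫ r in Ioo 0 t, G r / r := by
    rw [A0, intervalIntegral.integral_of_le ht, integral_Ioc_eq_integral_Ioo]
    apply setIntegral_congr_fun measurableSet_Ioo
    intro r hr
    simp only [hG, abs_mul, abs_of_pos hr.1]
  have hI : IntegrableOn (fun r => G r / r) (Ioo 0 t) := by
    apply Measure.integrableOn_of_bounded (M := a t * (((Measure.hausdorffMeasure (((m+1 : ℕ):ℝ) - 1) : Measure (Rn (m+1))).restrict
        (Metric.sphere 0 1))).real univ)
    · simp
    · exact (hGm.measurable.div measurable_id).aestronglyMeasurable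
    · filter_upwards [ae_restrict_mem measurableSet_Ioo] with r hr
      rw [Real.norm_of_nonneg (div_nonneg (hG0 r) hr.1.le), div_le_iff₀ hr.1]
      have h1 := hGle r hr.1.le
      have h2 := A_le hA hr.1.le
      have h3 := hA.2.1 (hr.1.le : r ∈ Ici 0) ht hr.2.le
      have h4 : 0 ≤ (((Measure.hausdorffMeasure (((m+1 : ℕ):ℝ) - 1) : Measure (Rn (m+1))).restrict
        (Metric.sphere 0 1))).real univ := measureReal_nonneg
      calc G r ≤ A r * (((Measure.hausdorffMeasure (((m+1 : ℕ):ℝ) - 1) : Measure (Rn (m+1))).restrict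
        (Metric.sphere 0 1))).real univ := h1
        _ ≤ (a t * r) * (((Measure.hausdorffMeasure (((m+1 : ℕ):ℝ) - 1) : Measure (Rn (m+1))).restrict
        (Metric.sphere 0 1))).real univ := by
          apply mul_le_mul_of_nonneg_right _ h4
          exact h2.trans (mul_le_mul_of_nonneg_right h3 hr.1.le)
        _ = _ := by ring
  rw [e1, ofReal_integral_eq_lintegral_ofReal hI]
  · apply setLIntegral_congr_fun measurableSet_Ioo
    intro r hr
    simp only [hG]
    rw [← integral_div, ofReal_integral_eq_lintegral_ofReal ((hint r hr.1.le).div_const r)]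
    exact Eventually.of_forall fun ω => div_nonneg (B_nonneg hA _) hr.1.le
  · filter_upwards [ae_restrict_mem measurableSet_Ioo] with r hr
    exact div_nonneg (hG0 r) hr.1.le

lemma lint_rot (f : ℝ → ℝ≥0∞) (hf : Measurable f) (v e : Rn (m+1)) (hv : ‖v‖ = ‖e‖) :
    ∫⁻ ω, f ⟪ω, v⟫ ∂((Measure.hausdorffMeasure (((m+1 : ℕ):ℝ) - 1) : Measure (Rn (m+1))).restrict
        (Metric.sphere 0 1)) = ∫⁻ ω, f ⟪ω, e⟫ ∂((Measure.hausdorffMeasure (((m+1 : ℕ):ℝ) - 1) : Measure (Rn (m+1))).restrict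
        (Metric.sphere 0 1)) := by
  obtain ⟨L, hL⟩ := exists_rot v e hv
  have mp := L.toIsometryEquiv.measurePreserving_hausdorffMeasure (((m+1 : ℕ):ℝ) - 1)
  have mp2 := mp.restrict_preimage (s := Metric.sphere (0 : Rn (m+1)) 1)
    Metric.isClosed_sphere.measurableSet
  have hpre : (L.toIsometryEquiv ⁻¹' Metric.sphere (0 : Rn (m+1)) 1) = Metric.sphere 0 1 := by
    ext x; simp
  rw [hpre] at mp2
  rw [← mp2.lintegral_comp (f := fun ω => f ⟪ω, e⟫) (hf.comp (by fun_prop))]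
  apply lintegral_congr
  intro ω
  have : ⟪L ω, e⟫ = ⟪ω, v⟫ := by rw [← hL, L.inner_map_map]
  simp [this]

lemma subst_rpow (s : ℝ) (hs : s ∈ Ioo (0:ℝ) 1) (V : ℝ) (hV : 0 < V) (g : ℝ → ℝ≥0∞) :
    ∫⁻ ρ in Ioo 0 V, g ρ =
      ∫⁻ r in Ioo (0:ℝ) 1, ENNReal.ofReal ((1-s) * r ^ (-s) * V) * g (r ^ (1-s) * V) := by
  have h1s : 0 < 1 - s := by linarith [hs.2]
  have him : (fun r : ℝ => r ^ (1-s) * V) '' Ioo 0 1 = Ioo 0 V := by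
    ext ρ; constructor
    · rintro ⟨r, hr, rfl⟩
      have h1 := Real.rpow_pos_of_pos hr.1 (1-s)
      have h2 := Real.rpow_lt_one hr.1.le hr.2 h1s
      exact ⟨by positivity, by show r ^ (1-s) * V < V; nlinarith⟩
    · intro hρ
      have hq : 0 < ρ / V := div_pos hρ.1 hV
      have hq1 : ρ / V < 1 := (div_lt_one hV).2 hρ.2
      refine ⟨(ρ / V) ^ (1-s)⁻¹, ⟨Real.rpow_pos_of_pos hq _, Real.rpow_lt_one hq.le hq1 (by positivity)⟩, ?_⟩
      simp only
      rw [← Real.rpow_mul hq.le, inv_mul_cancel₀ h1s.ne', Real.rpow_one]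
      field_simp
  rw [← him, lintegral_image_eq_lintegral_abs_deriv_mul measurableSet_Ioo
    (f' := fun r => (1-s) * r ^ (-s) * V)]
  · apply setLIntegral_congr_fun measurableSet_Ioo
    intro r hr
    have h1 := Real.rpow_pos_of_pos hr.1 (-s)
    simp only
    rw [abs_of_pos (by positivity)]
  · intro r hr
    have := (Real.hasDerivAt_rpow_const (x := r) (p := 1-s) (Or.inl hr.1.ne')).mul_const V
    rw [show 1 - s - 1 = -s by ring] at this
    exact this.hasDerivWithinAt
  · intro r hr r' hr' h
    have h : r ^ (1-s) * V = r' ^ (1-s) * V := h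
    have := mul_right_cancel₀ hV.ne' h
    exact (Real.rpow_left_inj hr.1.le hr'.1.le h1s.ne').1 this

lemma near_key (hA : IsYoungPair A a) (e : Rn (m+1)) (he : ‖e‖ = 1) (s : ℝ) (hs : s ∈ Ioo (0:ℝ) 1)
    (v : Rn (m+1)) :
    ENNReal.ofReal (1 - s) * ∫⁻ h in Metric.ball (0 : Rn (m+1)) 1,
      ENNReal.ofReal (A |⟪v, h⟫ * ‖h‖ ^ (-s)| * ‖h‖ ^ (-((m+1 : ℕ):ℝ)))
      ≤ ENNReal.ofReal (A0 A e ‖v‖) := by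
  have h1s : 0 < 1 - s := by linarith [hs.2]
  rcases eq_or_ne v 0 with rfl | hv
  · simp [A_zero hA]
  have hV : 0 < ‖v‖ := norm_pos_iff.2 hv
  set w : Rn (m+1) := ‖v‖⁻¹ • v with hw
  have hwn : ‖w‖ = ‖e‖ := by
    rw [hw, norm_smul, norm_inv, norm_norm, inv_mul_cancel₀ hV.ne', he]
  have hBm : Measurable (fun t => A |t|) := (B_cont hA).measurable
  have hFm : Measurable (fun h : Rn (m+1) =>
      ENNReal.ofReal (A |⟪v, h⟫ * ‖h‖ ^ (-s)| * ‖h‖ ^ (-((m+1 : ℕ):ℝ)))) := by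
    apply Measurable.ennreal_ofReal
    apply Measurable.mul
    · exact hBm.comp (by fun_prop)
    · fun_prop
  rw [← lintegral_indicator measurableSet_ball, polar (by omega) _ (hFm.indicator measurableSet_ball),
    ← lintegral_const_mul' _ _ ENNReal.ofReal_ne_top]
  have step : ∀ ω : Metric.sphere (0 : Rn (m+1)) 1,
      ENNReal.ofReal (1 - s) * ∫⁻ r in Ioi (0:ℝ),
        (Metric.ball (0 : Rn (m+1)) 1).indicator (fun h : Rn (m+1) =>
          ENNReal.ofReal (A |⟪v, h⟫ * ‖h‖ ^ (-s)| * ‖h‖ ^ (-((m+1 : ℕ):ℝ)))) (r • (ω : Rn (m+1)))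
          * ENNReal.ofReal (r ^ (m + 1 - 1))
      = ∫⁻ r in Ioo 0 ‖v‖, ENNReal.ofReal (A |r * ⟪(ω : Rn (m+1)), w⟫| / r) := by
    intro ω
    have hn : ‖(ω : Rn (m+1))‖ = 1 := by simpa using ω.2
    rw [subst_rpow s hs ‖v‖ hV, ← lintegral_const_mul' _ _ ENNReal.ofReal_ne_top,
      ← lintegral_indicator measurableSet_Ioi, ← lintegral_indicator measurableSet_Ioo]
    apply lintegral_congr
    intro r
    by_cases hr0 : 0 < r
    swap
    · rw [indicator_of_notMem (by simpa using hr0), indicator_of_notMem (fun h => hr0 h.1)]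
    rw [indicator_of_mem (by exact hr0)]
    have hno : ‖r • (ω : Rn (m+1))‖ = r := by rw [norm_smul, hn, Real.norm_of_nonneg hr0.le, mul_one]
    by_cases hr1 : r < 1
    swap
    · rw [indicator_of_notMem (by simpa [hno] using hr1), indicator_of_notMem (fun h => hr1 h.2)]
      simp
    rw [indicator_of_mem (by simpa [hno] using hr1), indicator_of_mem (by exact ⟨hr0, hr1⟩), hno]
    have p1 := Real.rpow_pos_of_pos hr0 (-s)
    have p2 := Real.rpow_pos_of_pos hr0 (1-s)
    have p3 := Real.rpow_pos_of_pos hr0 (-((m+1 : ℕ):ℝ))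
    rw [← ENNReal.ofReal_mul (mul_nonneg (B_nonneg hA _) p3.le), ← ENNReal.ofReal_mul h1s.le,
      ← ENNReal.ofReal_mul (by positivity)]
    congr 1
    have e1 : ⟪v, r • (ω : Rn (m+1))⟫ * r ^ (-s) = r ^ (1-s) * ‖v‖ * ⟪(ω : Rn (m+1)), w⟫ := by
      rw [hw, real_inner_smul_right, real_inner_smul_right, real_inner_comm,
        show (1 - s) = 1 + -s by ring, Real.rpow_add hr0, Real.rpow_one]
      field_simp
    rw [e1]
    have e2 : r ^ (-((m+1 : ℕ):ℝ)) * r ^ (m + 1 - 1) = r⁻¹ := by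
      rw [Real.rpow_neg hr0.le, Real.rpow_natCast]
      simp only [Nat.add_sub_cancel]
      rw [pow_succ]; field_simp
    have e3 : r ^ (1-s) = r * r ^ (-s) := by
      rw [show (1 - s) = 1 + -s by ring, Real.rpow_add hr0, Real.rpow_one]
    rw [mul_assoc (A _), e2]
    generalize A |r ^ (1 - s) * ‖v‖ * ⟪(ω : Rn (m+1)), w⟫| = z
    rw [e3]
    field_simp
  simp_rw [step]
  have hJ : Measurable (fun q : ℝ × Rn (m+1) => ENNReal.ofReal (A |q.1 * ⟪q.2, w⟫| / q.1)) := by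
    apply Measurable.ennreal_ofReal
    apply Measurable.div
    · exact hBm.comp (by fun_prop)
    · fun_prop
  rw [lintegral_lintegral_swap (by
    refine Measurable.aemeasurable ?_
    exact hJ.comp (by fun_prop : Measurable
      (fun q : Metric.sphere (0 : Rn (m+1)) 1 × ℝ => (q.2, (q.1 : Rn (m+1))))))]
  rw [ofReal_A0 hA e he _ hV.le]
  apply setLIntegral_mono' measurableSet_Ioo
  intro r hr
  have hJr : Measurable (fun t : ℝ => ENNReal.ofReal (A |r * t| / r)) := by
    apply Measurable.ennreal_ofReal
    apply Measurable.div
    · exact hBm.comp (by fun_prop)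
    · fun_prop
  calc _ = ∫⁻ ω, ENNReal.ofReal (A |r * ⟪ω, w⟫| / r) ∂(sig (m+1)) := by
        have hc : Measurable (fun ω : Rn (m+1) => ENNReal.ofReal (A |r * ⟪ω, w⟫| / r)) :=
          hJr.comp (by fun_prop : Measurable (fun ω : Rn (m+1) => ⟪ω, w⟫))
        rw [sig, lintegral_map hc measurable_subtype_coe]
    _ ≤ ∫⁻ ω, ENNReal.ofReal (A |r * ⟪ω, w⟫| / r) ∂((Measure.hausdorffMeasure (((m+1 : ℕ):ℝ) - 1) : Measure (Rn (m+1))).restrict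
        (Metric.sphere 0 1)) := lintegral_mono' sig_le_restrict le_rfl
    _ = _ := lint_rot (fun t => ENNReal.ofReal (A |r * t| / r)) hJr w e hwn

lemma far_key (s : ℝ) (hs : s ∈ Ioo (0:ℝ) 1) :
    ∫⁻ h in (Metric.ball (0 : Rn (m+1)) 1)ᶜ,
      ENNReal.ofReal (‖h‖ ^ (-s) * ‖h‖ ^ (-((m+1 : ℕ):ℝ))) = ENNReal.ofReal (nOmega (m+1) / s) := by
  have hFm : Measurable (fun h : Rn (m+1) =>
      ENNReal.ofReal (‖h‖ ^ (-s) * ‖h‖ ^ (-((m+1 : ℕ):ℝ)))) := by fun_prop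
  rw [← lintegral_indicator measurableSet_ball.compl,
    polar (by omega) _ (hFm.indicator measurableSet_ball.compl)]
  have step : ∀ ω : Metric.sphere (0 : Rn (m+1)) 1,
      ∫⁻ r in Ioi (0:ℝ),
        (Metric.ball (0 : Rn (m+1)) 1)ᶜ.indicator (fun h : Rn (m+1) =>
          ENNReal.ofReal (‖h‖ ^ (-s) * ‖h‖ ^ (-((m+1 : ℕ):ℝ)))) (r • (ω : Rn (m+1)))
          * ENNReal.ofReal (r ^ (m + 1 - 1))
      = ENNReal.ofReal (1/s) := by
    intro ω
    have hn : ‖(ω : Rn (m+1))‖ = 1 := by simpa using ω.2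
    calc _ = ∫⁻ r in Ici (1:ℝ), ENNReal.ofReal (r ^ (-s-1)) := by
          rw [← lintegral_indicator measurableSet_Ioi, ← lintegral_indicator measurableSet_Ici]
          apply lintegral_congr
          intro r
          by_cases hr0 : 0 < r
          swap
          · rw [indicator_of_notMem (by simpa using hr0),
              indicator_of_notMem (fun h : r ∈ Ici (1:ℝ) => hr0 (one_pos.trans_le h))]
          rw [indicator_of_mem (by exact hr0)]
          have hno : ‖r • (ω : Rn (m+1))‖ = r := by
            rw [norm_smul, hn, Real.norm_of_nonneg hr0.le, mul_one]
          by_cases hr1 : r < 1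
          · rw [indicator_of_notMem (by simpa [hno] using hr1),
              indicator_of_notMem (by simpa using hr1)]
            simp
          rw [indicator_of_mem (by simpa [hno] using hr1), indicator_of_mem (by simpa using hr1), hno,
            ← ENNReal.ofReal_mul (by positivity)]
          congr 1
          have e2 : r ^ (-((m+1 : ℕ):ℝ)) * r ^ (m + 1 - 1) = r⁻¹ := by
            rw [Real.rpow_neg hr0.le, Real.rpow_natCast]
            simp only [Nat.add_sub_cancel]
            rw [pow_succ]; field_simp
          rw [mul_assoc, e2, Real.rpow_sub hr0, Real.rpow_one]; rfl
      _ = ∫⁻ r in Ioi (1:ℝ), ENNReal.ofReal (r ^ (-s-1)) := by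
          rw [Measure.restrict_congr_set Ioi_ae_eq_Ici]
      _ = ENNReal.ofReal (∫ r in Ioi (1:ℝ), r ^ (-s-1)) := by
          rw [ofReal_integral_eq_lintegral_ofReal]
          · exact integrableOn_Ioi_rpow_of_lt (by linarith [hs.1]) one_pos
          · filter_upwards [ae_restrict_mem measurableSet_Ioi] with r hr
            have : (1:ℝ) < r := hr
            show 0 ≤ r ^ (-s-1)
            positivity
      _ = _ := by
          rw [integral_Ioi_rpow_of_lt (by linarith [hs.1]) one_pos]
          congr 1
          simp
  simp_rw [step]
  rw [lintegral_const, Measure.toSphere_apply_univ]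
  have : volume (Metric.ball (0 : Rn (m+1)) 1) =
      ENNReal.ofReal (volume (Metric.ball (0 : Rn (m+1)) 1)).toReal :=
    (ENNReal.ofReal_toReal measure_ball_lt_top.ne).symm
  rw [this, nOmega]
  simp only [finrank_euclideanSpace, Fintype.card_fin]
  rw [← ENNReal.ofReal_natCast, ← ENNReal.ofReal_mul (by positivity), ← ENNReal.ofReal_mul (by
    have := hs.1
    positivity)]
  congr 1
  ring
end AZero

section Main
variable {m : ℕ} {A a : ℝ → ℝ}

lemma js_eq (hA : IsYoungPair A a) (u : Rn (m+1) → ℝ) (hu : Continuous u) (s : ℝ) :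
    ∫⁻ p, ENNReal.ofReal (A (|holderQuot s u p|)) ∂(nuMeasure (m+1)) =
     ∫⁻ h : Rn (m+1), ENNReal.ofReal (‖h‖ ^ (-((m+1 : ℕ):ℝ))) *
      ∫⁻ x, ENNReal.ofReal (A |(u (x + h) - u x) * ‖h‖ ^ (-s)|) := by
  have hBm : Measurable (fun t => A |t|) := (B_cont hA).measurable
  have hum := hu.measurable
  have hw : Measurable (fun p : Rn (m+1) × Rn (m+1) =>
      ENNReal.ofReal (‖p.1 - p.2‖ ^ (-((m+1 : ℕ):ℝ)))) := by fun_prop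
  have hf : Measurable (fun p : Rn (m+1) × Rn (m+1) => ENNReal.ofReal (A (|holderQuot s u p|))) := by
    apply Measurable.ennreal_ofReal
    apply hBm.comp
    unfold holderQuot
    fun_prop
  rw [nuMeasure, lintegral_withDensity_eq_lintegral_mul _ hw hf, Measure.volume_eq_prod,
    lintegral_prod _ (hw.mul hf).aemeasurable]
  have e1 : ∀ x : Rn (m+1), ∫⁻ y, ((fun p : Rn (m+1) × Rn (m+1) =>
      ENNReal.ofReal (‖p.1 - p.2‖ ^ (-((m+1 : ℕ):ℝ)))) * fun p => ENNReal.ofReal (A (|holderQuot s u p|))) (x, y)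
      = ∫⁻ h, ENNReal.ofReal (‖h‖ ^ (-((m+1 : ℕ):ℝ))) *
       ENNReal.ofReal (A |(u (x + h) - u x) * ‖h‖ ^ (-s)|) := by
    intro x
    rw [← lintegral_add_left_eq_self _ x]
    apply lintegral_congr
    intro h
    have hn : ‖x - (x + h)‖ = ‖h‖ := by simp
    simp only [Pi.mul_apply, holderQuot, hn]
    congr 3
    rw [Real.rpow_neg (norm_nonneg _), ← div_eq_mul_inv, abs_div, abs_div, abs_sub_comm]
  simp_rw [e1]
  rw [lintegral_lintegral_swap]
  · apply lintegral_congr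
    intro h
    rw [lintegral_const_mul' _ _ ENNReal.ofReal_ne_top]
  · apply Measurable.aemeasurable
    unfold Function.uncurry
    refine Measurable.mul (f := fun q : Rn (m+1) × Rn (m+1) =>
      ENNReal.ofReal (‖q.2‖ ^ (-((m+1 : ℕ):ℝ)))) ?_ ?_
    · fun_prop
    · apply Measurable.ennreal_ofReal
      apply hBm.comp (by fun_prop :
        Measurable (fun q : Rn (m+1) × Rn (m+1) => (u (q.1 + q.2) - u q.1) * ‖q.2‖ ^ (-s)))

lemma far_I (hA : IsYoungPair A a) (u : Rn (m+1) → ℝ) (hu : Continuous u) (s : ℝ) (hs : 0 < s)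
    (h : Rn (m+1)) (hh : 1 ≤ ‖h‖) :
    ∫⁻ x, ENNReal.ofReal (A |(u (x + h) - u x) * ‖h‖ ^ (-s)|) ≤
      ENNReal.ofReal (‖h‖ ^ (-s)) * ∫⁻ x, ENNReal.ofReal (A |2 * u x|) := by
  have hBm : Measurable (fun t => A |t|) := (B_cont hA).measurable
  have hum := hu.measurable
  have hl : ‖h‖ ^ (-s) ≤ 1 := Real.rpow_le_one_of_one_le_of_nonpos hh (by linarith)
  have hm1 : Measurable (fun x => ENNReal.ofReal (A |2 * u x| / 2)) := by
    apply Measurable.ennreal_ofReal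
    exact (hBm.comp (by fun_prop : Measurable (fun x => 2 * u x))).div_const 2
  have hm2 : Measurable (fun x => ENNReal.ofReal (A |2 * u (x + h)| / 2)) :=
    hm1.comp (by fun_prop : Measurable (fun x : Rn (m+1) => x + h))
  have hl0 : 0 ≤ ‖h‖ ^ (-s) := by positivity
  calc _ ≤ ∫⁻ x, ENNReal.ofReal (‖h‖ ^ (-s)) *
        (ENNReal.ofReal (A |2 * u (x + h)| / 2) + ENNReal.ofReal (A |2 * u x| / 2)) := by
        apply lintegral_mono
        intro x
        simp only
        rw [← ENNReal.ofReal_add (div_nonneg (B_nonneg hA _) zero_le_two)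
          (div_nonneg (B_nonneg hA _) zero_le_two), ← ENNReal.ofReal_mul hl0]
        exact ENNReal.ofReal_le_ofReal (B_far hA _ _ hl0 hl)
    _ = ENNReal.ofReal (‖h‖ ^ (-s)) *
        ((∫⁻ x, ENNReal.ofReal (A |2 * u x| / 2)) + ∫⁻ x, ENNReal.ofReal (A |2 * u x| / 2)) := by
        rw [lintegral_const_mul' _ _ ENNReal.ofReal_ne_top, lintegral_add_left hm2,
          lintegral_add_right_eq_self (fun x => ENNReal.ofReal (A |2 * u x| / 2)) h]
    _ = _ := by
        rw [← lintegral_add_left hm1]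
        congr 1
        apply lintegral_congr
        intro x
        rw [← ENNReal.ofReal_add (div_nonneg (B_nonneg hA _) zero_le_two)
          (div_nonneg (B_nonneg hA _) zero_le_two), add_halves]

lemma grad_cont (u : Rn (m+1) → ℝ) (hu : ContDiff ℝ 2 u) : Continuous (gradient u) := by
  have h1 : Continuous (fderiv ℝ u) := hu.continuous_fderiv (by norm_num)
  unfold gradient
  exact (InnerProductSpace.toDual ℝ (Rn (m+1))).symm.continuous.comp h1

lemma ftc (u : Rn (m+1) → ℝ) (hu : ContDiff ℝ 2 u) (x h : Rn (m+1)) :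
    u (x + h) - u x = ∫ t in Icc (0:ℝ) 1, ⟪gradient u (x + t • h), h⟫ := by
  have hd : Differentiable ℝ u := hu.differentiable (by norm_num)
  have hg := grad_cont u hu
  rw [integral_Icc_eq_integral_Ioc, ← intervalIntegral.integral_of_le zero_le_one]
  rw [intervalIntegral.integral_eq_sub_of_hasDerivAt (f := fun t : ℝ => u (x + t • h))]
  · simp
  · intro t _
    have h1 : HasDerivAt (fun t : ℝ => x + t • h) h t := by
      simpa using ((hasDerivAt_id t).smul_const h).const_add x
    have h2 := (hd (x + t • h)).hasGradientAt.hasFDerivAt.comp_hasDerivAt t h1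
    simpa [Function.comp_def] using h2
  · apply Continuous.intervalIntegrable
    fun_prop

lemma near_pt (hA : IsYoungPair A a) (u : Rn (m+1) → ℝ) (hu : ContDiff ℝ 2 u) (l : ℝ) (x h : Rn (m+1)) :
    ENNReal.ofReal (A |(u (x + h) - u x) * l|) ≤
      ∫⁻ t in Icc (0:ℝ) 1, ENNReal.ofReal (A |⟪gradient u (x + t • h), h⟫ * l|) := by
  have hg := grad_cont u hu
  have : IsProbabilityMeasure ((volume : Measure ℝ).restrict (Icc 0 1)) := ⟨by simp⟩
  have hc1 : Continuous (fun t : ℝ => ⟪gradient u (x + t • h), h⟫ * l) := by fun_prop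
  have hc2 : Continuous (fun t : ℝ => A |⟪gradient u (x + t • h), h⟫ * l|) := (B_cont hA).comp hc1
  have hi2 := hc2.integrableOn_Icc (a := 0) (b := 1) (μ := volume)
  rw [← ofReal_integral_eq_lintegral_ofReal hi2 (Eventually.of_forall fun t => B_nonneg hA _)]
  apply ENNReal.ofReal_le_ofReal
  rw [ftc u hu, ← integral_mul_const]
  exact (B_convex hA).map_integral_le (B_cont hA).continuousOn isClosed_univ (by simp)
    (hc1.integrableOn_Icc) hi2

lemma near_I (hA : IsYoungPair A a) (u : Rn (m+1) → ℝ) (hu : ContDiff ℝ 2 u) (l : ℝ) (h : Rn (m+1)) :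
    ∫⁻ x, ENNReal.ofReal (A |(u (x + h) - u x) * l|) ≤
      ∫⁻ x, ENNReal.ofReal (A |⟪gradient u x, h⟫ * l|) := by
  have hg := grad_cont u hu
  refine (lintegral_mono (fun x => near_pt hA u hu l x h)).trans ?_
  rw [lintegral_lintegral_swap]
  · have : ∀ t : ℝ, ∫⁻ x, ENNReal.ofReal (A |⟪gradient u (x + t • h), h⟫ * l|) =
        ∫⁻ x, ENNReal.ofReal (A |⟪gradient u x, h⟫ * l|) := fun t =>
      lintegral_add_right_eq_self (fun x => ENNReal.ofReal (A |⟪gradient u x, h⟫ * l|)) (t • h)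
    simp_rw [this]
    simp
  · apply Measurable.aemeasurable
    apply Measurable.ennreal_ofReal
    exact ((B_cont hA).comp (by fun_prop : Continuous
      (fun q : Rn (m+1) × ℝ => ⟪gradient u (q.1 + q.2 • h), h⟫ * l))).measurable

theorem main (hA : IsYoungPair A a)
    (e : Rn (m+1)) (he : ‖e‖ = 1)
    (u : Rn (m+1) → ℝ) (hu : ContDiff ℝ 2 u) (hsupp : HasCompactSupport u)
    (s : ℝ) (hs : s ∈ Set.Ioo (0:ℝ) 1) :
    Js A s u ≤ JlimSmooth A e u
      + ENNReal.ofReal ((1 - s) / s * nOmega (m+1) * ∫ x, A (2 * |u x|)) := by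
  have h1s : 0 < 1 - s := by linarith [hs.2]
  have hs0 := hs.1
  have hg := grad_cont u hu
  have hBm : Measurable (fun t => A |t|) := (B_cont hA).measurable
  have hK : ∫⁻ x, ENNReal.ofReal (A |2 * u x|) = ENNReal.ofReal (∫ x, A (2 * |u x|)) := by
    have e2 : ∀ x, A (2 * |u x|) = A |2 * u x| := fun x => by rw [abs_mul, abs_two]
    simp_rw [e2]
    rw [ofReal_integral_eq_lintegral_ofReal _ (Eventually.of_forall fun t => B_nonneg hA _)]
    apply Continuous.integrable_of_hasCompactSupport
    · exact (B_cont hA).comp (by have := hu.continuous; fun_prop)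
    · exact hsupp.comp_left (g := fun t => A |2 * t|) (by simp [A_zero hA])
  set K := ∫ x, A (2 * |u x|) with hKdef
  have hK0 : 0 ≤ K := integral_nonneg fun x => A_nonneg hA (by positivity)
  rw [Js, js_eq hA u hu.continuous, ← lintegral_add_compl _ (measurableSet_ball
    (x := (0 : Rn (m+1))) (ε := 1)), mul_add]
  apply add_le_add
  · calc _ ≤ ENNReal.ofReal (1 - s) * ∫⁻ h in Metric.ball (0 : Rn (m+1)) 1, ∫⁻ x,
          ENNReal.ofReal (A |⟪gradient u x, h⟫ * ‖h‖ ^ (-s)| * ‖h‖ ^ (-((m+1 : ℕ):ℝ))) := by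
          apply mul_le_mul_right
          apply lintegral_mono
          intro h
          simp only
          calc _ ≤ ENNReal.ofReal (‖h‖ ^ (-((m+1 : ℕ):ℝ))) *
                ∫⁻ x, ENNReal.ofReal (A |⟪gradient u x, h⟫ * ‖h‖ ^ (-s)|) :=
                mul_le_mul_right (near_I hA u hu _ h) _
            _ = _ := by
                rw [← lintegral_const_mul' _ _ ENNReal.ofReal_ne_top]
                apply lintegral_congr
                intro x
                rw [mul_comm, ← ENNReal.ofReal_mul (B_nonneg hA _)]
      _ = ∫⁻ x, ENNReal.ofReal (1 - s) * ∫⁻ h in Metric.ball (0 : Rn (m+1)) 1,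
          ENNReal.ofReal (A |⟪gradient u x, h⟫ * ‖h‖ ^ (-s)| * ‖h‖ ^ (-((m+1 : ℕ):ℝ))) := by
          rw [lintegral_lintegral_swap, lintegral_const_mul' _ _ ENNReal.ofReal_ne_top]
          apply Measurable.aemeasurable
          apply Measurable.ennreal_ofReal
          apply Measurable.mul
          · have hgm := hg.measurable
            exact hBm.comp (by fun_prop : Measurable
              (fun q : Rn (m+1) × Rn (m+1) => ⟪gradient u q.2, q.1⟫ * ‖q.1‖ ^ (-s)))
          · fun_prop
      _ ≤ _ := lintegral_mono fun x => near_key hA e he s hs (gradient u x)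
  · calc _ ≤ ENNReal.ofReal (1 - s) * ∫⁻ h in (Metric.ball (0 : Rn (m+1)) 1)ᶜ,
          ENNReal.ofReal (‖h‖ ^ (-s) * ‖h‖ ^ (-((m+1 : ℕ):ℝ))) * ENNReal.ofReal K := by
          apply mul_le_mul_right
          apply setLIntegral_mono' measurableSet_ball.compl
          intro h hh
          have hh1 : 1 ≤ ‖h‖ := by simpa using hh
          have := far_I hA u hu.continuous s hs0 h hh1
          rw [hK] at this
          refine (mul_le_mul_right this _).trans (le_of_eq ?_)
          rw [ENNReal.ofReal_mul (by positivity)]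
          ring
      _ = ENNReal.ofReal (1 - s) * (ENNReal.ofReal (nOmega (m+1) / s) * ENNReal.ofReal K) := by
          rw [lintegral_mul_const' _ _ ENNReal.ofReal_ne_top, far_key s hs]
      _ = _ := by
          have hO : 0 ≤ nOmega (m+1) := by unfold nOmega; positivity
          rw [← ENNReal.ofReal_mul (by positivity), ← ENNReal.ofReal_mul h1s.le]
          congr 1
          ring
end Main
end S9

/-- For an arbitrary Young function `A`, `u ∈ C²_c(ℝⁿ)` and
`s ∈ (0,1)`, `𝒥_s(u) ≤ 𝒥(u) + ((1−s)/s) n ω_n ∫ A(2|u|) dx`. -/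
theorem statement9 {n : ℕ} (A a : ℝ → ℝ) (hA : IsYoungPair A a)
    (e : Rn n) (he : ‖e‖ = 1)
    (u : Rn n → ℝ) (hu : ContDiff ℝ 2 u) (hsupp : HasCompactSupport u)
    (s : ℝ) (hs : s ∈ Set.Ioo (0:ℝ) 1) :
    Js A s u ≤ JlimSmooth A e u
      + ENNReal.ofReal ((1 - s) / s * nOmega n * ∫ x, A (2 * |u x|)) := by
  rcases n with _ | m
  · exact absurd he (by rw [Subsingleton.elim e 0]; simp)
  · exact S9.main hA e he u hu hsupp s hs
end
end

section
/- Let A be an arbitrary Young function and u ∈ C²_c(ℝⁿ) with supp u ⊂ B_R(0) for some R > 1. For s ∈ (0,1) set F_s(x) = (1−s) ∫_{ℝⁿ} A(|u(x) − u(y)| / |x−y|^s) |x−y|^{−n} dy. Then for every x with |x| < 2R and every s ∈ (0,1), F_s(x) ≤ nω_n A(‖∇u‖_∞) + ((1−s)/s) nω_n A(2‖u‖_∞), where nω_n = H^{n−1}(S^{n−1}). -/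
open MeasureTheory Filter Topology
open scoped ENNReal RealInnerProductSpace

noncomputable section

theorem aux_int {A a : ℝ → ℝ} (hA : IsYoungPair A a) {p q : ℝ} (hp : 0 ≤ p) (hq : 0 ≤ q) :
    IntervalIntegrable a volume p q := by
  apply MonotoneOn.intervalIntegrable
  apply hA.2.1.mono
  intro z hz
  exact le_trans (le_min hp hq) hz.1

theorem aux_zero {A a : ℝ → ℝ} (hA : IsYoungPair A a) : A 0 = 0 := by
  rw [hA.2.2.2.2.2.2 0 le_rfl]; simp

theorem aux_mono {A a : ℝ → ℝ} (hA : IsYoungPair A a) {p q : ℝ} (hp : 0 ≤ p) (hpq : p ≤ q) :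
    A p ≤ A q := by
  rw [hA.2.2.2.2.2.2 p hp, hA.2.2.2.2.2.2 q (hp.trans hpq)]
  apply intervalIntegral.integral_mono_interval le_rfl hp hpq
  · exact Eventually.of_forall hA.1
  · exact aux_int hA le_rfl (hp.trans hpq)

theorem aux_nonneg {A a : ℝ → ℝ} (hA : IsYoungPair A a) {p : ℝ} (hp : 0 ≤ p) : 0 ≤ A p := by
  have := aux_mono hA le_rfl hp
  rwa [aux_zero hA] at this

theorem aux_scale {A a : ℝ → ℝ} (hA : IsYoungPair A a) {c t : ℝ} (hc : 0 ≤ c) (hc1 : c ≤ 1)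
    (ht : 0 ≤ t) : A (c * t) ≤ c * A t := by
  rw [hA.2.2.2.2.2.2 _ (mul_nonneg hc ht), hA.2.2.2.2.2.2 t ht]
  have h := intervalIntegral.smul_integral_comp_mul_left (a := 0) (b := t) a c
  rw [mul_zero] at h
  rw [← h, smul_eq_mul]
  apply mul_le_mul_of_nonneg_left _ hc
  apply intervalIntegral.integral_mono_on ht
  · apply MonotoneOn.intervalIntegrable
    rw [Set.uIcc_of_le ht]
    intro y hy z hz hyz
    exact hA.2.1 (mul_nonneg hc hy.1) (mul_nonneg hc hz.1) (mul_le_mul_of_nonneg_left hyz hc)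
  · exact aux_int hA le_rfl ht
  · intro y hy
    apply hA.2.1 (mul_nonneg hc hy.1) hy.1
    exact mul_le_of_le_one_left hy.1 hc1

/-- radial majorant -/
def auxG (n : ℕ) (s P Q : ℝ) (r : ℝ) : ℝ :=
  if r ≤ 1 then P * r ^ (1 - s - n) else Q * r ^ (-s - n)

theorem auxG_1d (n : ℕ) (hn : n ≠ 0) (s P Q : ℝ) (hs : s ∈ Set.Ioo (0:ℝ) 1) :
    IntegrableOn (fun y : ℝ => y ^ (n - 1) • auxG n s P Q y) (Set.Ioi 0) ∧
    ∫ y in Set.Ioi (0:ℝ), y ^ (n - 1) • auxG n s P Q y = P / (1 - s) + Q / s := by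
  have e1 : Set.EqOn (fun y : ℝ => P * y ^ (-s)) (fun y : ℝ => y ^ (n - 1) • auxG n s P Q y)
      (Set.Ioc 0 1) := by
    intro y hy
    have hy0 : 0 < y := hy.1
    simp only [auxG, if_pos hy.2, smul_eq_mul]
    rw [← Real.rpow_natCast, mul_left_comm, ← Real.rpow_add hy0,
      Nat.cast_sub (Nat.one_le_iff_ne_zero.2 hn)]
    congr 2; push_cast; ring
  have e2 : Set.EqOn (fun y : ℝ => Q * y ^ (-s - 1)) (fun y : ℝ => y ^ (n - 1) • auxG n s P Q y)
      (Set.Ioi 1) := by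
    intro y hy
    have hy1 : 1 < y := hy
    have hy0 : 0 < y := by linarith
    simp only [auxG, if_neg (not_le.2 hy1), smul_eq_mul]
    rw [← Real.rpow_natCast, mul_left_comm, ← Real.rpow_add hy0,
      Nat.cast_sub (Nat.one_le_iff_ne_zero.2 hn)]
    congr 2; push_cast; ring
  have i1 : IntegrableOn (fun y : ℝ => P * y ^ (-s)) (Set.Ioc 0 1) := by
    have := (intervalIntegral.intervalIntegrable_rpow' (a := 0) (b := 1) (r := -s)
      (by linarith [hs.2])).const_mul P
    rwa [intervalIntegrable_iff_integrableOn_Ioc_of_le zero_le_one] at this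
  have i2 : IntegrableOn (fun y : ℝ => Q * y ^ (-s - 1)) (Set.Ioi 1) :=
    (integrableOn_Ioi_rpow_of_lt (by linarith [hs.1]) one_pos).const_mul Q
  have j1 := i1.congr_fun e1 measurableSet_Ioc
  have j2 := i2.congr_fun e2 measurableSet_Ioi
  have hU : Set.Ioc (0:ℝ) 1 ∪ Set.Ioi 1 = Set.Ioi 0 := Set.Ioc_union_Ioi_eq_Ioi zero_le_one
  have hd : Disjoint (Set.Ioc (0:ℝ) 1) (Set.Ioi 1) := by
    rw [Set.disjoint_left]; intro y hy hy'; exact absurd hy.2 (not_le.2 hy')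
  rw [← hU]
  refine ⟨j1.union j2, ?_⟩
  rw [setIntegral_union hd measurableSet_Ioi j1 j2,
    ← setIntegral_congr_fun measurableSet_Ioc e1, ← setIntegral_congr_fun measurableSet_Ioi e2,
    integral_const_mul, integral_const_mul, integral_Ioi_rpow_of_lt (by linarith [hs.1]) one_pos,
    ← intervalIntegral.integral_of_le zero_le_one, integral_rpow (Or.inl (by linarith [hs.2]))]
  have h1 : -s + 1 ≠ 0 := by linarith [hs.2]
  have h1' : 1 - s ≠ 0 := by linarith [hs.2]
  have h2 : s ≠ 0 := hs.1.ne'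
  rw [Real.zero_rpow h1, Real.one_rpow, Real.one_rpow, sub_add_cancel, neg_add_eq_sub]
  field_simp
  ring

/-- **estimate (3.6).** For an arbitrary Young function `A` and
`u ∈ C²_c(ℝⁿ)` with `supp u ⊂ B_R(0)`, `R > 1`: for `|x| < 2R` and `s ∈ (0,1)`,
`F_s(x) ≤ n ω_n A(‖∇u‖_∞) + ((1−s)/s) n ω_n A(2‖u‖_∞)`. -/
theorem statement12 {n : ℕ} (A a : ℝ → ℝ) (hA : IsYoungPair A a)
    (u : Rn n → ℝ) (hu : ContDiff ℝ 2 u) (R : ℝ) (hR : 1 < R)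
    (hsupp : tsupport u ⊆ Metric.ball 0 R)
    (s : ℝ) (hs : s ∈ Set.Ioo (0:ℝ) 1)
    (x : Rn n) (hx : ‖x‖ < 2 * R) :
    Fs A s u x ≤ nOmega n * A (⨆ z : Rn n, ‖gradient u z‖)
      + (1 - s) / s * nOmega n * A (2 * ⨆ z : Rn n, |u z|) := by
  have hs0 := hs.1
  have hs1 : 0 < 1 - s := by linarith [hs.2]
  have hcs : HasCompactSupport u :=
    (isCompact_closedBall (0 : Rn n) R).of_isClosed_subset (isClosed_tsupport u)
      (hsupp.trans Metric.ball_subset_closedBall)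
  have hgn : ∀ z, ‖gradient u z‖ = ‖fderiv ℝ u z‖ := fun z => by
    simp [gradient]
  have hbG : BddAbove (Set.range fun z => ‖gradient u z‖) := by
    simp only [hgn]
    obtain ⟨C, hC⟩ := (hcs.fderiv ℝ).exists_bound_of_continuous (hu.continuous_fderiv (by norm_num))
    exact ⟨C, by rintro _ ⟨z, rfl⟩; exact hC z⟩
  have hbM : BddAbove (Set.range fun z => |u z|) := by
    obtain ⟨C, hC⟩ := hcs.exists_bound_of_continuous hu.continuous
    exact ⟨C, by rintro _ ⟨z, rfl⟩; exact hC z⟩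
  set G := ⨆ z : Rn n, ‖gradient u z‖ with hG
  set M := ⨆ z : Rn n, |u z| with hM
  have hG0 : 0 ≤ G := Real.iSup_nonneg fun _ => norm_nonneg _
  have hM0 : 0 ≤ M := Real.iSup_nonneg fun _ => abs_nonneg _
  have hlip : ∀ y, |u x - u y| ≤ G * ‖x - y‖ := fun y =>
    Convex.norm_image_sub_le_of_norm_fderiv_le (𝕜 := ℝ) (s := Set.univ)
      (fun z _ => (hu.differentiable (by norm_num)) z)
      (fun z _ => (hgn z) ▸ le_ciSup hbG z) convex_univ (Set.mem_univ _) (Set.mem_univ _)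
  have hosc : ∀ y, |u x - u y| ≤ 2 * M := fun y => by
    have h1 : |u x| ≤ M := le_ciSup hbM x
    have h2 : |u y| ≤ M := le_ciSup hbM y
    have := abs_sub (u x) (u y)
    linarith
  have hAG := aux_nonneg hA hG0
  have hAM : 0 ≤ A (2 * M) := aux_nonneg hA (by positivity)
  rcases Nat.eq_zero_or_pos n with hn | hn
  · subst hn
    have : ∀ y : Rn 0, |u x - u y| = 0 := fun y => by rw [Subsingleton.elim x y]; simp
    simp [Fs, nOmega, this, aux_zero hA]
  have hn0 : n ≠ 0 := hn.ne'
  have : Nonempty (Fin n) := ⟨⟨0, hn⟩⟩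
  have : Nontrivial (Rn n) := inferInstance
  obtain ⟨hi, he⟩ := auxG_1d n hn0 s (A G) (A (2 * M)) hs
  have hfr : Module.finrank ℝ (Rn n) = n := by simp
  have hint : Integrable (fun z : Rn n => auxG n s (A G) (A (2 * M)) ‖z‖) volume := by
    rw [integrable_fun_norm_addHaar, hfr]; exact hi
  have hval : ∫ z : Rn n, auxG n s (A G) (A (2 * M)) ‖z‖
      = nOmega n * (A G / (1 - s) + A (2 * M) / s) := by
    rw [integral_fun_norm_addHaar, hfr, he, nOmega]
    simp [measureReal_def, mul_assoc]
  have hpt : ∀ y, A (|u x - u y| / ‖x - y‖ ^ s) * ‖x - y‖ ^ (-(n:ℝ))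
      ≤ auxG n s (A G) (A (2 * M)) ‖x - y‖ := by
    intro y
    rcases eq_or_ne x y with rfl | hxy
    · have : (0:ℝ) ≤ A G * 0 ^ (1 - s - n) := mul_nonneg hAG (Real.rpow_nonneg le_rfl _)
      simpa [aux_zero hA, auxG] using this
    have hr : 0 < ‖x - y‖ := norm_pos_iff.2 (sub_ne_zero.2 hxy)
    have hl := hlip y
    have ho := hosc y
    generalize ‖x - y‖ = r at hr hl
    have hrs : 0 < r ^ s := Real.rpow_pos_of_pos hr s
    have hq : 0 ≤ |u x - u y| / r ^ s := by positivity
    unfold auxG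
    split_ifs with h
    · have h1 : A (|u x - u y| / r ^ s) ≤ r ^ (1 - s) * A G := by
        refine le_trans (aux_mono hA hq (q := r ^ (1 - s) * G) ?_)
          (aux_scale hA (by positivity) (Real.rpow_le_one hr.le h hs1.le) hG0)
        rw [div_le_iff₀ hrs, mul_right_comm, ← Real.rpow_add hr]
        simpa [mul_comm] using hl
      calc _ ≤ (r ^ (1 - s) * A G) * r ^ (-(n:ℝ)) :=
            mul_le_mul_of_nonneg_right h1 (by positivity)
        _ = _ := by rw [mul_right_comm, ← Real.rpow_add hr, mul_comm]; rfl
    · have hs' : r ^ (-s) ≤ 1 := Real.rpow_le_one_of_one_le_of_nonpos (not_le.1 h).le (by linarith)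
      have h1 : A (|u x - u y| / r ^ s) ≤ r ^ (-s) * A (2 * M) := by
        refine le_trans (aux_mono hA hq (q := r ^ (-s) * (2 * M)) ?_)
          (aux_scale hA (by positivity) hs' (by positivity))
        rw [div_le_iff₀ hrs, mul_right_comm, ← Real.rpow_add hr]
        simpa using ho
      calc _ ≤ (r ^ (-s) * A (2 * M)) * r ^ (-(n:ℝ)) :=
            mul_le_mul_of_nonneg_right h1 (by positivity)
        _ = _ := by rw [mul_right_comm, ← Real.rpow_add hr, mul_comm]; rfl
  have hmain : ∫ y, A (|u x - u y| / ‖x - y‖ ^ s) * ‖x - y‖ ^ (-(n:ℝ))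
      ≤ nOmega n * (A G / (1 - s) + A (2 * M) / s) := by
    rw [← hval, ← integral_sub_left_eq_self (fun z : Rn n => auxG n s (A G) (A (2 * M)) ‖z‖) volume x]
    apply integral_mono_of_nonneg
    · exact Eventually.of_forall fun y =>
        mul_nonneg (aux_nonneg hA (by positivity)) (by positivity)
    · exact hint.comp_sub_left x
    · exact Eventually.of_forall hpt
  unfold Fs
  refine (mul_le_mul_of_nonneg_left hmain hs1.le).trans (le_of_eq ?_)
  have := hs1.ne'
  field_simp
end
end
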